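/- Let P, Q : ℝ^m → ℝ be differentiable, f = (P,Q), and let x lie on the sphere S^{m-1}_ε = {x : ‖x‖ = ε} with f(x) ≠ 0. Then x is a critical point of the restriction of φ = f/‖f‖ to S^{m-1}_ε \ K_ε (i.e., Dφ(x)·v = 0 for every v with ⟨v, x⟩ = 0) if and only if ω(x) = λ·x for some real number λ. -/

import Mathlib

open scoped InnerProductSpace

/-!
Locally `φ = (cos θ, sin θ)` with `dθ = (P dQ - Q dP) / ‖f‖²`. So `Dφ` is this 1-form times the
nonzero vector `φ` rotated by a right angle, and `Dφ(x) v` vanishes exactly when `ω(x) ⟂ v`. The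
vectors orthogonal to every `v` that is orthogonal to `x` are the multiples of `x`, because the
line through `x` is its own double orthogonal complement.
-/

theorem sqrt_sq_add_sq_pos {a b : ℝ} (h : ¬(a = 0 ∧ b = 0)) : 0 < √(a ^ 2 + b ^ 2) := by
  rcases not_and_or.mp h with ha | hb <;> positivity

theorem forall_inner_eq_zero_imp_iff_exists_eq_smul {𝕜 E : Type*} [RCLike 𝕜]
    [NormedAddCommGroup E] [InnerProductSpace 𝕜 E] {w x : E} :
    (∀ v : E, ⟪v, x⟫_𝕜 = 0 → ⟪w, v⟫_𝕜 = 0) ↔ ∃ c : 𝕜, w = c • x := by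
  calc (∀ v : E, ⟪v, x⟫_𝕜 = 0 → ⟪w, v⟫_𝕜 = 0)
    _ ↔ w ∈ (𝕜 ∙ x)ᗮᗮ := by
      simp only [Submodule.mem_orthogonal' (𝕜 ∙ x)ᗮ,
        Submodule.mem_orthogonal_singleton_iff_inner_left]
    _ ↔ ∃ c : 𝕜, w = c • x := by
      simp only [Submodule.orthogonal_orthogonal, Submodule.mem_span_singleton, eq_comm]

section NormedSpace

variable {E : Type*} [NormedAddCommGroup E] [NormedSpace ℝ E] {P Q : E → ℝ} {x : E}

/-- The map `φ = f / ‖f‖` for `f = (P, Q)`. The Euclidean norm of `f` is written out because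
`ℝ × ℝ` carries the sup norm; zeros of `f` are sent to `0`. -/
noncomputable def normalizedPair (P Q : E → ℝ) (y : E) : ℝ × ℝ :=
  (P y / √(P y ^ 2 + Q y ^ 2), Q y / √(P y ^ 2 + Q y ^ 2))

theorem hasFDerivAt_sqrt_sq_add_sq {P' Q' : E →L[ℝ] ℝ} (hP : HasFDerivAt P P' x)
    (hQ : HasFDerivAt Q Q' x) (hPQ : ¬(P x = 0 ∧ Q x = 0)) :
    HasFDerivAt (fun y ↦ √(P y ^ 2 + Q y ^ 2))
      ((√(P x ^ 2 + Q x ^ 2))⁻¹ • (P x • P' + Q x • Q')) x := by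
  have norm_pos : 0 < √(P x ^ 2 + Q x ^ 2) := sqrt_sq_add_sq_pos hPQ
  refine (((hP.pow 2).add (hQ.pow 2)).sqrt (Real.sqrt_pos.mp norm_pos).ne').congr_fderiv ?_
  ext v
  simp only [Pi.add_apply, one_div, Nat.add_one_sub_one, pow_one, nsmul_eq_mul, Nat.cast_ofNat,
    add_apply, smul_apply, smul_eq_mul]
  field_simp

theorem hasFDerivAt_div_sqrt_sq_add_sq {P' Q' : E →L[ℝ] ℝ} (hP : HasFDerivAt P P' x)
    (hQ : HasFDerivAt Q Q' x) (hPQ : ¬(P x = 0 ∧ Q x = 0)) :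
    HasFDerivAt (fun y ↦ P y / √(P y ^ 2 + Q y ^ 2))
      ((-Q x / √(P x ^ 2 + Q x ^ 2) ^ 3) • (P x • Q' - Q x • P')) x := by
  have norm_pos : 0 < √(P x ^ 2 + Q x ^ 2) := sqrt_sq_add_sq_pos hPQ
  have norm_sq : √(P x ^ 2 + Q x ^ 2) ^ 2 = P x ^ 2 + Q x ^ 2 :=
    Real.sq_sqrt (Real.sqrt_pos.mp norm_pos).le
  have inv_norm_deriv :=
    (hasDerivAt_inv norm_pos.ne').comp_hasFDerivAt x (hasFDerivAt_sqrt_sq_add_sq hP hQ hPQ)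
  refine (hP.mul inv_norm_deriv).congr_fderiv ?_
  ext v
  simp only [Function.comp_apply, add_apply, smul_apply, smul_eq_mul, sub_apply]
  field_simp
  rw [norm_sq]
  ring

theorem hasFDerivAt_normalizedPair {P' Q' : E →L[ℝ] ℝ} (hP : HasFDerivAt P P' x)
    (hQ : HasFDerivAt Q Q' x) (hPQ : ¬(P x = 0 ∧ Q x = 0)) :
    HasFDerivAt (normalizedPair P Q)
      (((√(P x ^ 2 + Q x ^ 2) ^ 3)⁻¹ • (P x • Q' - Q x • P')).smulRight (-Q x, P x)) x := by
  have fst_deriv := hasFDerivAt_div_sqrt_sq_add_sq hP hQ hPQ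
  have snd_deriv := hasFDerivAt_div_sqrt_sq_add_sq hQ hP (mt And.symm hPQ)
  simp only [add_comm (Q _ ^ 2)] at snd_deriv
  refine (fst_deriv.prodMk snd_deriv).congr_fderiv (ContinuousLinearMap.ext fun v ↦ ?_)
  simp only [ContinuousLinearMap.prod_apply, smul_apply, sub_apply, smul_eq_mul,
    ContinuousLinearMap.smulRight_apply, Prod.smul_mk]
  ext <;> ring

theorem fderiv_normalizedPair_apply_eq_zero_iff (hP : DifferentiableAt ℝ P x)
    (hQ : DifferentiableAt ℝ Q x) (hPQ : ¬(P x = 0 ∧ Q x = 0)) (v : E) :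
    fderiv ℝ (normalizedPair P Q) x v = 0 ↔ P x * fderiv ℝ Q x v - Q x * fderiv ℝ P x v = 0 := by
  have rotated_ne_zero : (-Q x, P x) ≠ 0 := by
    rwa [Ne, Prod.mk_eq_zero, neg_eq_zero, and_comm]
  have norm_cube_ne_zero : √(P x ^ 2 + Q x ^ 2) ^ 3 ≠ 0 := (pow_pos (sqrt_sq_add_sq_pos hPQ) 3).ne'
  rw [(hasFDerivAt_normalizedPair hP.hasFDerivAt hQ.hasFDerivAt hPQ).fderiv,
    ContinuousLinearMap.smulRight_apply, smul_eq_zero_iff_left rotated_ne_zero,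
    smul_apply, smul_eq_zero_iff_right (inv_ne_zero norm_cube_ne_zero)]
  simp only [sub_apply, smul_apply, smul_eq_mul]

end NormedSpace

section HilbertSpace

variable {E : Type*} [NormedAddCommGroup E] [InnerProductSpace ℝ E] [CompleteSpace E]
  {P Q : E → ℝ} {x : E}

/-- The vector field `ω = P ∇Q - Q ∇P`, which is `‖f‖²` times the gradient of a local angle
function of `f = (P, Q)` where `f` does not vanish. -/
noncomputable def angularField (P Q : E → ℝ) (x : E) : E :=
  P x • gradient Q x - Q x • gradient P x

theorem inner_angularField_left (P Q : E → ℝ) (x v : E) :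
    ⟪angularField P Q x, v⟫_ℝ = P x * fderiv ℝ Q x v - Q x * fderiv ℝ P x v := by
  simp only [angularField, inner_sub_left, real_inner_smul_left, inner_gradient_left]

theorem critical_point_iff_omega_parallel_general (hP : DifferentiableAt ℝ P x)
    (hQ : DifferentiableAt ℝ Q x) (hPQ : ¬(P x = 0 ∧ Q x = 0)) :
    (∀ v : E, ⟪v, x⟫_ℝ = 0 → fderiv ℝ (normalizedPair P Q) x v = 0) ↔
      ∃ c : ℝ, angularField P Q x = c • x := by
  simp only [fderiv_normalizedPair_apply_eq_zero_iff hP hQ hPQ, ← inner_angularField_left,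
    forall_inner_eq_zero_imp_iff_exists_eq_smul]

end HilbertSpace

/-- For `P, Q` differentiable, `‖x‖ = ε > 0` and `f x ≠ 0`, the point `x` is a
critical point of the restriction of `φ = f/‖f‖` to the sphere `S_ε` (i.e. `Dφ(x)·v = 0` for all
`v` tangent to the sphere at `x`) iff `ω x = λ • x` for some real `λ`. -/
theorem critical_point_iff_omega_parallel
    (m : ℕ) (P Q : EuclideanSpace ℝ (Fin m) → ℝ)
    (hP : Differentiable ℝ P) (hQ : Differentiable ℝ Q)
    (ε : ℝ) (hε : 0 < ε) (x : EuclideanSpace ℝ (Fin m)) (hx : ‖x‖ = ε)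
    (hfx : ¬(P x = 0 ∧ Q x = 0)) :
    (∀ v : EuclideanSpace ℝ (Fin m), ⟪v, x⟫_ℝ = 0 →
        fderiv ℝ (fun y => (P y / Real.sqrt (P y ^ 2 + Q y ^ 2),
                            Q y / Real.sqrt (P y ^ 2 + Q y ^ 2))) x v = 0) ↔
      ∃ lam : ℝ, P x • gradient Q x - Q x • gradient P x = lam • x :=
  critical_point_iff_omega_parallel_general (hP x) (hQ x) hfx
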